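/- arXiv:2201.03854 — 6 statements merged into one kernel-verified Lean document; each statement's English description precedes it below -/
import Mathlib

section
/- The bilinear antisymmetric bracket on 𝔤 = ℝ⁴ determined by the structure constants λ, α, β, a, b, r, z₁, z₂, z₃, z₄, w₁, w₂, θ₁, θ₂ satisfies the Jacobi identity [E,[F,G]] + [F,[G,E]] + [G,[E,F]] = 0 for all E, F, G ∈ 𝔤 if and only if the following fourteen polynomial equations hold: λa = 0; λb = 0; −w₂z₃ + w₁z₄ − 2αθ₁ + rz₁ = 0; −2z₄z₁ + 2z₃z₂ − 2aθ₁ + rz₃ = 0; −λz₃ − z₂b + z₄β − z₁a + z₃α = 0; −λz₄ − z₂a + z₄α + z₁b − z₃β = 0; λθ₁ − w₁z₄ + w₂z₃ − 2aθ₂ − rz₁ = 0; −λθ₂ + 2z₁w₂ − 2z₂w₁ − 2αθ₂ + rw₁ = 0; −w₂a − w₁b − z₂α − z₁β − αr = 0; −w₂b + w₁a − z₂β + z₁α + rβ = 0; λz₁ − w₂b − z₂β − w₁a − z₁α = 0; z₂a + z₁b − z₄α − z₃β − ar = 0; z₂b − z₁a − z₄β + z₃α + rb = 0; λz₂ − w₂a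 − z₂α + w₁b + z₁β = 0. -/
noncomputable section

/-- The bilinear antisymmetric bracket on ℝ⁴ determined by the structure constants. -/
def bk (lam α β a b r z₁ z₂ z₃ z₄ w₁ w₂ θ₁ θ₂ : ℝ) (E F : Fin 4 → ℝ) : Fin 4 → ℝ :=
  (E 0 * F 1 - E 1 * F 0) • (![-r, 0, -θ₁, -θ₂] : Fin 4 → ℝ) +
  (E 0 * F 2 - E 2 * F 0) • (![-α, -β, -z₁, -w₁] : Fin 4 → ℝ) +
  (E 0 * F 3 - E 3 * F 0) • (![-a, -b, -z₃, z₁] : Fin 4 → ℝ) +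
  (E 1 * F 2 - E 2 * F 1) • (![β, -α, -z₂, -w₂] : Fin 4 → ℝ) +
  (E 1 * F 3 - E 3 * F 1) • (![b, -a, -z₄, z₂] : Fin 4 → ℝ) +
  (E 2 * F 3 - E 3 * F 2) • (![0, 0, 0, -lam] : Fin 4 → ℝ)

theorem jacobi_iff (lam α β a b r z₁ z₂ z₃ z₄ w₁ w₂ θ₁ θ₂ : ℝ) :
    (∀ E F G : Fin 4 → ℝ,
      bk lam α β a b r z₁ z₂ z₃ z₄ w₁ w₂ θ₁ θ₂ E (bk lam α β a b r z₁ z₂ z₃ z₄ w₁ w₂ θ₁ θ₂ F G) +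
        bk lam α β a b r z₁ z₂ z₃ z₄ w₁ w₂ θ₁ θ₂ F (bk lam α β a b r z₁ z₂ z₃ z₄ w₁ w₂ θ₁ θ₂ G E) +
        bk lam α β a b r z₁ z₂ z₃ z₄ w₁ w₂ θ₁ θ₂ G (bk lam α β a b r z₁ z₂ z₃ z₄ w₁ w₂ θ₁ θ₂ E F) = 0) ↔
    (lam * a = 0 ∧
      lam * b = 0 ∧
      -w₂ * z₃ + w₁ * z₄ - 2 * α * θ₁ + r * z₁ = 0 ∧
      -2 * z₄ * z₁ + 2 * z₃ * z₂ - 2 * a * θ₁ + r * z₃ = 0 ∧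
      -lam * z₃ - z₂ * b + z₄ * β - z₁ * a + z₃ * α = 0 ∧
      -lam * z₄ - z₂ * a + z₄ * α + z₁ * b - z₃ * β = 0 ∧
      lam * θ₁ - w₁ * z₄ + w₂ * z₃ - 2 * a * θ₂ - r * z₁ = 0 ∧
      -lam * θ₂ + 2 * z₁ * w₂ - 2 * z₂ * w₁ - 2 * α * θ₂ + r * w₁ = 0 ∧
      -w₂ * a - w₁ * b - z₂ * α - z₁ * β - α * r = 0 ∧
      -w₂ * b + w₁ * a - z₂ * β + z₁ * α + r * β = 0 ∧
      lam * z₁ - w₂ * b - z₂ * β - w₁ * a - z₁ * α = 0 ∧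
      z₂ * a + z₁ * b - z₄ * α - z₃ * β - a * r = 0 ∧
      z₂ * b - z₁ * a - z₄ * β + z₃ * α + r * b = 0 ∧
      lam * z₂ - w₂ * a - z₂ * α + w₁ * b + z₁ * β = 0) := by
  constructor
  · intro h
    have h012 := h ![1,0,0,0] ![0,1,0,0] ![0,0,1,0]
    have h013 := h ![1,0,0,0] ![0,1,0,0] ![0,0,0,1]
    have h023 := h ![1,0,0,0] ![0,0,1,0] ![0,0,0,1]
    have h123 := h ![0,1,0,0] ![0,0,1,0] ![0,0,0,1]
    have h012_0 := congrFun h012 0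
    have h012_1 := congrFun h012 1
    have h012_2 := congrFun h012 2
    have h012_3 := congrFun h012 3
    have h013_0 := congrFun h013 0
    have h013_1 := congrFun h013 1
    have h013_2 := congrFun h013 2
    have h013_3 := congrFun h013 3
    have h023_0 := congrFun h023 0
    have h023_1 := congrFun h023 1
    have h023_2 := congrFun h023 2
    have h023_3 := congrFun h023 3
    have h123_0 := congrFun h123 0
    have h123_1 := congrFun h123 1
    have h123_2 := congrFun h123 2
    have h123_3 := congrFun h123 3
    clear h h012 h013 h023 h123
    simp [bk] at h012_0 h012_1 h012_2 h012_3 h013_0 h013_1 h013_2 h013_3 h023_0 h023_1 h023_2 h023_3 h123_0 h123_1 h123_2 h123_3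
    refine ⟨?_, ?_, ?_, ?_, ?_, ?_, ?_, ?_, ?_, ?_, ?_, ?_, ?_, ?_⟩ <;> linarith
  · rintro ⟨e1, e2, e3, e4, e5, e6, e7, e8, e9, e10, e11, e12, e13, e14⟩ E F G
    have j012_0 : (-α)*(-r) + (-z₂)*(-α) + (-w₂)*(-a) + (-(-α))*(-(-r)) + (-(-z₁))*(β) + (-(-w₁))*(b) + (-r)*(-(-α)) = 0 := by linarith
    have j012_1 : (-z₂)*(-β) + (-w₂)*(-b) + (-(-z₁))*(-α) + (-(-w₁))*(-a) + (-r)*(-(-β)) = 0 := by linarith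
    have j012_2 : (-α)*(-θ₁) + (-z₂)*(-z₁) + (-w₂)*(-z₃) + (-(-α))*(-(-θ₁)) + (-(-z₁))*(-z₂) + (-(-w₁))*(-z₄) + (-r)*(-(-z₁)) = 0 := by linarith
    have j012_3 : (-α)*(-θ₂) + (-z₂)*(-w₁) + (-w₂)*(z₁) + (-(-α))*(-(-θ₂)) + (-(-z₁))*(-w₂) + (-(-w₁))*(z₂) + (-r)*(-(-w₁)) + (-θ₂)*(-lam) = 0 := by linarith
    have j013_0 : (-a)*(-r) + (-z₄)*(-α) + (z₂)*(-a) + (-(-a))*(-(-r)) + (-(-z₃))*(β) + (-(z₁))*(b) + (-r)*(-(-a)) = 0 := by linarith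
    have j013_1 : (-z₄)*(-β) + (z₂)*(-b) + (-(-z₃))*(-α) + (-(z₁))*(-a) + (-r)*(-(-b)) = 0 := by linarith
    have j013_2 : (-a)*(-θ₁) + (-z₄)*(-z₁) + (z₂)*(-z₃) + (-(-a))*(-(-θ₁)) + (-(-z₃))*(-z₂) + (-(z₁))*(-z₄) + (-r)*(-(-z₃)) = 0 := by linarith
    have j013_3 : (-a)*(-θ₂) + (-z₄)*(-w₁) + (z₂)*(z₁) + (-(-a))*(-(-θ₂)) + (-(-z₃))*(-w₂) + (-(z₁))*(z₂) + (-r)*(-(z₁)) + (-θ₁)*(-(-lam)) = 0 := by linarith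
    have j023_0 : (-lam)*(-a) + (-(-a))*(-(-α)) + (-(-b))*(-(β)) + (-α)*(-(-a)) + (-β)*(-(b)) = 0 := by linarith
    have j023_1 : (-lam)*(-b) + (-(-a))*(-(-β)) + (-(-b))*(-(-α)) + (-α)*(-(-b)) + (-β)*(-(-a)) = 0 := by linarith
    have j023_2 : (-lam)*(-z₃) + (-(-a))*(-(-z₁)) + (-(-b))*(-(-z₂)) + (-α)*(-(-z₃)) + (-β)*(-(-z₄)) = 0 := by linarith
    have j023_3 : (-lam)*(z₁) + (-(-a))*(-(-w₁)) + (-(-b))*(-(-w₂)) + (-(z₁))*(-lam) + (-α)*(-(z₁)) + (-β)*(-(z₂)) + (-z₁)*(-(-lam)) = 0 := by linarith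
    have j123_0 : (-lam)*(b) + (-(b))*(-(-α)) + (-(-a))*(-(β)) + (β)*(-(-a)) + (-α)*(-(b)) = 0 := by linarith
    have j123_1 : (-lam)*(-a) + (-(b))*(-(-β)) + (-(-a))*(-(-α)) + (β)*(-(-b)) + (-α)*(-(-a)) = 0 := by linarith
    have j123_2 : (-lam)*(-z₄) + (-(b))*(-(-z₁)) + (-(-a))*(-(-z₂)) + (β)*(-(-z₃)) + (-α)*(-(-z₄)) = 0 := by linarith
    have j123_3 : (-lam)*(z₂) + (-(b))*(-(-w₁)) + (-(-a))*(-(-w₂)) + (-(z₂))*(-lam) + (β)*(-(z₁)) + (-α)*(-(z₂)) + (-z₂)*(-(-lam)) = 0 := by linarith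
    ext k
    fin_cases k
    · simp [bk]
      linear_combination (E 0 * (F 1 * G 2 - F 2 * G 1) - E 1 * (F 0 * G 2 - F 2 * G 0) + E 2 * (F 0 * G 1 - F 1 * G 0)) * j012_0 + (E 0 * (F 1 * G 3 - F 3 * G 1) - E 1 * (F 0 * G 3 - F 3 * G 0) + E 3 * (F 0 * G 1 - F 1 * G 0)) * j013_0 + (E 0 * (F 2 * G 3 - F 3 * G 2) - E 2 * (F 0 * G 3 - F 3 * G 0) + E 3 * (F 0 * G 2 - F 2 * G 0)) * j023_0 + (E 1 * (F 2 * G 3 - F 3 * G 2) - E 2 * (F 1 * G 3 - F 3 * G 1) + E 3 * (F 1 * G 2 - F 2 * G 1)) * j123_0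
    · simp [bk]
      linear_combination (E 0 * (F 1 * G 2 - F 2 * G 1) - E 1 * (F 0 * G 2 - F 2 * G 0) + E 2 * (F 0 * G 1 - F 1 * G 0)) * j012_1 + (E 0 * (F 1 * G 3 - F 3 * G 1) - E 1 * (F 0 * G 3 - F 3 * G 0) + E 3 * (F 0 * G 1 - F 1 * G 0)) * j013_1 + (E 0 * (F 2 * G 3 - F 3 * G 2) - E 2 * (F 0 * G 3 - F 3 * G 0) + E 3 * (F 0 * G 2 - F 2 * G 0)) * j023_1 + (E 1 * (F 2 * G 3 - F 3 * G 2) - E 2 * (F 1 * G 3 - F 3 * G 1) + E 3 * (F 1 * G 2 - F 2 * G 1)) * j123_1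
    · simp [bk]
      linear_combination (E 0 * (F 1 * G 2 - F 2 * G 1) - E 1 * (F 0 * G 2 - F 2 * G 0) + E 2 * (F 0 * G 1 - F 1 * G 0)) * j012_2 + (E 0 * (F 1 * G 3 - F 3 * G 1) - E 1 * (F 0 * G 3 - F 3 * G 0) + E 3 * (F 0 * G 1 - F 1 * G 0)) * j013_2 + (E 0 * (F 2 * G 3 - F 3 * G 2) - E 2 * (F 0 * G 3 - F 3 * G 0) + E 3 * (F 0 * G 2 - F 2 * G 0)) * j023_2 + (E 1 * (F 2 * G 3 - F 3 * G 2) - E 2 * (F 1 * G 3 - F 3 * G 1) + E 3 * (F 1 * G 2 - F 2 * G 1)) * j123_2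
    · simp [bk]
      linear_combination (E 0 * (F 1 * G 2 - F 2 * G 1) - E 1 * (F 0 * G 2 - F 2 * G 0) + E 2 * (F 0 * G 1 - F 1 * G 0)) * j012_3 + (E 0 * (F 1 * G 3 - F 3 * G 1) - E 1 * (F 0 * G 3 - F 3 * G 0) + E 3 * (F 0 * G 1 - F 1 * G 0)) * j013_3 + (E 0 * (F 2 * G 3 - F 3 * G 2) - E 2 * (F 0 * G 3 - F 3 * G 0) + E 3 * (F 0 * G 2 - F 2 * G 0)) * j023_3 + (E 1 * (F 2 * G 3 - F 3 * G 2) - E 2 * (F 1 * G 3 - F 3 * G 1) + E 3 * (F 1 * G 2 - F 2 * G 1)) * j123_3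

end
end

section
/- Assume the bracket [·,·] satisfies the Jacobi identity, so that 𝔤 is a Lie algebra. Then J is almost Kähler, i.e. dω(E,F,G) = 0 for all E, F, G ∈ 𝔤, if and only if θ₁ = 2a and θ₂ = −2α. -/
noncomputable section

/-- The almost Hermitian structure J with J(X)=Y, J(Y)=-X, J(Z)=W, J(W)=-Z. -/
def Jm (E : Fin 4 → ℝ) : Fin 4 → ℝ := ![-E 1, E 0, -E 3, E 2]

/-- The standard inner product, making {X,Y,Z,W} orthonormal. -/
def ip (E F : Fin 4 → ℝ) : ℝ := E 0 * F 0 + E 1 * F 1 + E 2 * F 2 + E 3 * F 3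

/-- The Kähler form ω(E,F) = ⟨JE, F⟩. -/
def om (E F : Fin 4 → ℝ) : ℝ := ip (Jm E) F

/-- The left-invariant exterior derivative of the Kähler form. -/
def dom (lam α β a b r z₁ z₂ z₃ z₄ w₁ w₂ θ₁ θ₂ : ℝ) (E F G : Fin 4 → ℝ) : ℝ :=
  -om (bk lam α β a b r z₁ z₂ z₃ z₄ w₁ w₂ θ₁ θ₂ E F) G - om (bk lam α β a b r z₁ z₂ z₃ z₄ w₁ w₂ θ₁ θ₂ F G) E - om (bk lam α β a b r z₁ z₂ z₃ z₄ w₁ w₂ θ₁ θ₂ G E) F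

theorem almostKaehler_iff (lam α β a b r z₁ z₂ z₃ z₄ w₁ w₂ θ₁ θ₂ : ℝ)
    (hJac : (∀ E F G : Fin 4 → ℝ,
      bk lam α β a b r z₁ z₂ z₃ z₄ w₁ w₂ θ₁ θ₂ E (bk lam α β a b r z₁ z₂ z₃ z₄ w₁ w₂ θ₁ θ₂ F G) +
        bk lam α β a b r z₁ z₂ z₃ z₄ w₁ w₂ θ₁ θ₂ F (bk lam α β a b r z₁ z₂ z₃ z₄ w₁ w₂ θ₁ θ₂ G E) +
        bk lam α β a b r z₁ z₂ z₃ z₄ w₁ w₂ θ₁ θ₂ G (bk lam α β a b r z₁ z₂ z₃ z₄ w₁ w₂ θ₁ θ₂ E F) = 0)) :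
    (∀ E F G : Fin 4 → ℝ, dom lam α β a b r z₁ z₂ z₃ z₄ w₁ w₂ θ₁ θ₂ E F G = 0) ↔
    (θ₁ = 2 * a ∧ θ₂ = -2 * α) := by
  have key : ∀ E F G : Fin 4 → ℝ, dom lam α β a b r z₁ z₂ z₃ z₄ w₁ w₂ θ₁ θ₂ E F G =
      -(θ₂ + 2 * α) * (E 0 * (F 1 * G 2 - F 2 * G 1) - E 1 * (F 0 * G 2 - F 2 * G 0)
        + E 2 * (F 0 * G 1 - F 1 * G 0)) +
      (θ₁ - 2 * a) * (E 0 * (F 1 * G 3 - F 3 * G 1) - E 1 * (F 0 * G 3 - F 3 * G 0)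
        + E 3 * (F 0 * G 1 - F 1 * G 0)) := by
    intro E F G
    simp [dom, om, ip, Jm, bk]
    ring
  constructor
  · intro h
    have h1 := h ![1, 0, 0, 0] ![0, 1, 0, 0] ![0, 0, 1, 0]
    have h2 := h ![1, 0, 0, 0] ![0, 1, 0, 0] ![0, 0, 0, 1]
    rw [key] at h1 h2
    simp at h1 h2
    constructor <;> linarith
  · rintro ⟨rfl, rfl⟩ E F G
    rw [key]
    ring

end
end

section
/- Assume the bracket [·,·] satisfies the Jacobi identity, so that 𝔤 is a Lie algebra. Then J is integrable, i.e. the Nijenhuis tensor N(E,F) = 0 for all E, F ∈ 𝔤, if and only if 2z₁ − z₄ − w₂ = 0 and 2z₂ + z₃ + w₁ = 0. -/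
noncomputable section

/-- The Nijenhuis tensor of J. -/
def NT (lam α β a b r z₁ z₂ z₃ z₄ w₁ w₂ θ₁ θ₂ : ℝ) (E F : Fin 4 → ℝ) : Fin 4 → ℝ :=
  bk lam α β a b r z₁ z₂ z₃ z₄ w₁ w₂ θ₁ θ₂ E F + Jm (bk lam α β a b r z₁ z₂ z₃ z₄ w₁ w₂ θ₁ θ₂ (Jm E) F) + Jm (bk lam α β a b r z₁ z₂ z₃ z₄ w₁ w₂ θ₁ θ₂ E (Jm F)) -
    bk lam α β a b r z₁ z₂ z₃ z₄ w₁ w₂ θ₁ θ₂ (Jm E) (Jm F)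

theorem integrable_iff (lam α β a b r z₁ z₂ z₃ z₄ w₁ w₂ θ₁ θ₂ : ℝ)
    (hJac : (∀ E F G : Fin 4 → ℝ,
      bk lam α β a b r z₁ z₂ z₃ z₄ w₁ w₂ θ₁ θ₂ E (bk lam α β a b r z₁ z₂ z₃ z₄ w₁ w₂ θ₁ θ₂ F G) +
        bk lam α β a b r z₁ z₂ z₃ z₄ w₁ w₂ θ₁ θ₂ F (bk lam α β a b r z₁ z₂ z₃ z₄ w₁ w₂ θ₁ θ₂ G E) +
        bk lam α β a b r z₁ z₂ z₃ z₄ w₁ w₂ θ₁ θ₂ G (bk lam α β a b r z₁ z₂ z₃ z₄ w₁ w₂ θ₁ θ₂ E F) = 0)) :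
    (∀ E F : Fin 4 → ℝ, NT lam α β a b r z₁ z₂ z₃ z₄ w₁ w₂ θ₁ θ₂ E F = 0) ↔
    (2 * z₁ - z₄ - w₂ = 0 ∧ 2 * z₂ + z₃ + w₁ = 0) := by
  constructor
  · intro h
    have h1 := h ![1, 0, 0, 0] ![0, 0, 1, 0]
    have h2 := congrFun h1 2
    have h3 := congrFun h1 3
    simp [NT, bk, Jm] at h2 h3
    constructor <;> linarith
  · rintro ⟨h1, h2⟩ E F
    have e1 : w₂ = 2 * z₁ - z₄ := by linarith
    have e2 : w₁ = -(2 * z₂ + z₃) := by linarith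
    subst e1 e2
    ext i
    fin_cases i <;> simp [NT, bk, Jm] <;> ring

end
end

section
/- Assume the bracket [·,·] satisfies the Jacobi identity, so that 𝔤 is a Lie algebra. Then J is Kähler, i.e. both dω(E,F,G) = 0 for all E, F, G ∈ 𝔤 and N(E,F) = 0 for all E, F ∈ 𝔤, if and only if 2z₁ − z₄ − w₂ = 0, 2z₂ + z₃ + w₁ = 0, θ₁ = 2a and θ₂ = −2α. -/
noncomputable section

theorem kaehler_iff (lam α β a b r z₁ z₂ z₃ z₄ w₁ w₂ θ₁ θ₂ : ℝ)
    (hJac : (∀ E F G : Fin 4 → ℝ,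
      bk lam α β a b r z₁ z₂ z₃ z₄ w₁ w₂ θ₁ θ₂ E (bk lam α β a b r z₁ z₂ z₃ z₄ w₁ w₂ θ₁ θ₂ F G) +
        bk lam α β a b r z₁ z₂ z₃ z₄ w₁ w₂ θ₁ θ₂ F (bk lam α β a b r z₁ z₂ z₃ z₄ w₁ w₂ θ₁ θ₂ G E) +
        bk lam α β a b r z₁ z₂ z₃ z₄ w₁ w₂ θ₁ θ₂ G (bk lam α β a b r z₁ z₂ z₃ z₄ w₁ w₂ θ₁ θ₂ E F) = 0)) :
    ((∀ E F G : Fin 4 → ℝ, dom lam α β a b r z₁ z₂ z₃ z₄ w₁ w₂ θ₁ θ₂ E F G = 0) ∧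
      (∀ E F : Fin 4 → ℝ, NT lam α β a b r z₁ z₂ z₃ z₄ w₁ w₂ θ₁ θ₂ E F = 0)) ↔
    (2 * z₁ - z₄ - w₂ = 0 ∧ 2 * z₂ + z₃ + w₁ = 0 ∧ θ₁ = 2 * a ∧ θ₂ = -2 * α) := by
  constructor
  · rintro ⟨hd, hN⟩
    have h1 := hd ![1, 0, 0, 0] ![0, 1, 0, 0] ![0, 0, 1, 0]
    have h2 := hd ![1, 0, 0, 0] ![0, 1, 0, 0] ![0, 0, 0, 1]
    have h3 := congrFun (hN ![1, 0, 0, 0] ![0, 0, 1, 0]) 2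
    have h4 := congrFun (hN ![1, 0, 0, 0] ![0, 0, 1, 0]) 3
    simp [dom, om, ip, Jm, bk] at h1 h2
    simp [NT, Jm, bk] at h3 h4
    refine ⟨?_, ?_, ?_, ?_⟩ <;> linarith
  · rintro ⟨h1, h2, h3, h4⟩
    obtain rfl : z₄ = 2 * z₁ - w₂ := by linarith
    obtain rfl : z₃ = -2 * z₂ - w₁ := by linarith
    subst h3 h4
    constructor
    · intro E F G
      simp [dom, om, ip, Jm, bk]
      ring
    · intro E F
      ext i
      fin_cases i <;> simp [NT, Jm, bk] <;> ring

end
end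

section
/- Assume the bracket [·,·] satisfies the Jacobi identity, so that 𝔤 is a Lie algebra. Then the second fundamental form B^𝒱 of the vertical distribution vanishes identically, i.e. ℋ(∇_U V + ∇_V U) = 0 for all U, V ∈ 𝒱 = span{Z, W} (equivalently, the foliation tangent to 𝒱 is totally geodesic), if and only if z₁ = 0, z₂ = 0, z₃ + w₁ = 0 and z₄ + w₂ = 0. -/
noncomputable section

/-- The Levi-Civita connection, via the Koszul formula
2⟨∇_E F, G⟩ = ⟨[E,F],G⟩ - ⟨[F,G],E⟩ + ⟨[G,E],F⟩ on the orthonormal basis. -/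
def grad (lam α β a b r z₁ z₂ z₃ z₄ w₁ w₂ θ₁ θ₂ : ℝ) (E F : Fin 4 → ℝ) : Fin 4 → ℝ := fun i =>
  (1 / 2) * (ip (bk lam α β a b r z₁ z₂ z₃ z₄ w₁ w₂ θ₁ θ₂ E F) (Pi.single i 1) -
    ip (bk lam α β a b r z₁ z₂ z₃ z₄ w₁ w₂ θ₁ θ₂ F (Pi.single i 1)) E + ip (bk lam α β a b r z₁ z₂ z₃ z₄ w₁ w₂ θ₁ θ₂ (Pi.single i 1) E) F)

/-- Orthogonal projection onto the horizontal space span{X, Y}. -/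
def hproj (E : Fin 4 → ℝ) : Fin 4 → ℝ := ![E 0, E 1, 0, 0]

theorem totallyGeodesic_iff (lam α β a b r z₁ z₂ z₃ z₄ w₁ w₂ θ₁ θ₂ : ℝ)
    (hJac : (∀ E F G : Fin 4 → ℝ,
      bk lam α β a b r z₁ z₂ z₃ z₄ w₁ w₂ θ₁ θ₂ E (bk lam α β a b r z₁ z₂ z₃ z₄ w₁ w₂ θ₁ θ₂ F G) +
        bk lam α β a b r z₁ z₂ z₃ z₄ w₁ w₂ θ₁ θ₂ F (bk lam α β a b r z₁ z₂ z₃ z₄ w₁ w₂ θ₁ θ₂ G E) +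
        bk lam α β a b r z₁ z₂ z₃ z₄ w₁ w₂ θ₁ θ₂ G (bk lam α β a b r z₁ z₂ z₃ z₄ w₁ w₂ θ₁ θ₂ E F) = 0)) :
    (∀ U V : Fin 4 → ℝ, U 0 = 0 → U 1 = 0 → V 0 = 0 → V 1 = 0 →
      hproj (grad lam α β a b r z₁ z₂ z₃ z₄ w₁ w₂ θ₁ θ₂ U V + grad lam α β a b r z₁ z₂ z₃ z₄ w₁ w₂ θ₁ θ₂ V U) = 0) ↔
    (z₁ = 0 ∧ z₂ = 0 ∧ z₃ + w₁ = 0 ∧ z₄ + w₂ = 0) := by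
  have key0 : ∀ U V : Fin 4 → ℝ, U 0 = 0 → U 1 = 0 → V 0 = 0 → V 1 = 0 →
      (grad lam α β a b r z₁ z₂ z₃ z₄ w₁ w₂ θ₁ θ₂ U V +
        grad lam α β a b r z₁ z₂ z₃ z₄ w₁ w₂ θ₁ θ₂ V U) 0 =
      -2 * z₁ * (U 2 * V 2 - U 3 * V 3) - (z₃ + w₁) * (U 2 * V 3 + U 3 * V 2) := by
    intro U V h1 h2 h3 h4
    simp [grad, ip, bk, h1, h2, h3, h4, Pi.single_apply]
    ring
  have key1 : ∀ U V : Fin 4 → ℝ, U 0 = 0 → U 1 = 0 → V 0 = 0 → V 1 = 0 →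
      (grad lam α β a b r z₁ z₂ z₃ z₄ w₁ w₂ θ₁ θ₂ U V +
        grad lam α β a b r z₁ z₂ z₃ z₄ w₁ w₂ θ₁ θ₂ V U) 1 =
      -2 * z₂ * (U 2 * V 2 - U 3 * V 3) - (z₄ + w₂) * (U 2 * V 3 + U 3 * V 2) := by
    intro U V h1 h2 h3 h4
    simp [grad, ip, bk, h1, h2, h3, h4, Pi.single_apply]
    ring
  constructor
  · intro h
    have hzz := h ![0, 0, 1, 0] ![0, 0, 1, 0] rfl rfl rfl rfl
    have hzw := h ![0, 0, 1, 0] ![0, 0, 0, 1] rfl rfl rfl rfl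
    rw [hproj, key0 _ _ rfl rfl rfl rfl, key1 _ _ rfl rfl rfl rfl] at hzz hzw
    have e1 := congrFun hzz 0
    have e2 := congrFun hzz 1
    have e3 := congrFun hzw 0
    have e4 := congrFun hzw 1
    simp at e1 e2 e3 e4
    refine ⟨e1, e2, ?_, ?_⟩ <;> linarith
  · rintro ⟨h1, h2, h3, h4⟩ U V u0 u1 v0 v1
    rw [hproj, key0 U V u0 u1 v0 v1, key1 U V u0 u1 v0 v1, h1, h2, h3, h4]
    ext i
    fin_cases i <;> simp

end
end

section
/- Assume the bracket [·,·] satisfies the Jacobi identity, so that 𝔤 is a Lie algebra. Then the second fundamental form B^ℌ of the horizontal distribution vanishes identically, i.e. 𝒱(∇_U V + ∇_V U) = 0 for all U, V ∈ ℌ = span{X, Y} (equivalently, the conformal foliation tangent to 𝒱 is Riemannian), if and only if α = 0 and a = 0. -/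
noncomputable section

/-- Orthogonal projection onto the vertical space span{Z, W}. -/
def vproj (E : Fin 4 → ℝ) : Fin 4 → ℝ := ![0, 0, E 2, E 3]

theorem riemannian_iff (lam α β a b r z₁ z₂ z₃ z₄ w₁ w₂ θ₁ θ₂ : ℝ)
    (hJac : (∀ E F G : Fin 4 → ℝ,
      bk lam α β a b r z₁ z₂ z₃ z₄ w₁ w₂ θ₁ θ₂ E (bk lam α β a b r z₁ z₂ z₃ z₄ w₁ w₂ θ₁ θ₂ F G) +
        bk lam α β a b r z₁ z₂ z₃ z₄ w₁ w₂ θ₁ θ₂ F (bk lam α β a b r z₁ z₂ z₃ z₄ w₁ w₂ θ₁ θ₂ G E) +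
        bk lam α β a b r z₁ z₂ z₃ z₄ w₁ w₂ θ₁ θ₂ G (bk lam α β a b r z₁ z₂ z₃ z₄ w₁ w₂ θ₁ θ₂ E F) = 0)) :
    (∀ U V : Fin 4 → ℝ, U 2 = 0 → U 3 = 0 → V 2 = 0 → V 3 = 0 →
      vproj (grad lam α β a b r z₁ z₂ z₃ z₄ w₁ w₂ θ₁ θ₂ U V + grad lam α β a b r z₁ z₂ z₃ z₄ w₁ w₂ θ₁ θ₂ V U) = 0) ↔
    (α = 0 ∧ a = 0) := by
  constructor
  · intro h
    have h1 := h (Pi.single 0 1) (Pi.single 0 1) (by simp) (by simp) (by simp) (by simp)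
    have h2 := congrFun h1 2
    have h3 := congrFun h1 3
    simp [vproj, grad, ip, bk, Pi.single_apply] at h2 h3
    constructor <;> linarith
  · rintro ⟨rfl, rfl⟩ U V hU2 hU3 hV2 hV3
    funext i
    fin_cases i <;>
      simp [vproj, grad, ip, bk, Pi.single_apply, hU2, hU3, hV2, hV3] <;> ring


end
end
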